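/- Let H be a separable complex Hilbert space and let A be a commutative C*-subalgebra of B(H), i.e. a commutative, norm-closed, star-closed subalgebra of the algebra of bounded linear operators on H. Then the spectrum of A satisfies the Suslin condition. -/

import Mathlib

/-!
Disjoint nonempty open sets in the spectrum of `A` are, by Urysohn's lemma and Gelfand duality,
separated by mutually orthogonal nonzero elements of `A`. Such elements are operators with
mutually orthogonal nonzero ranges, and a separable Hilbert space has room for only countably many
of those. If `A` has no unit, its spectrum is an open subset of the spectrum of its unitization,
and adjoining a unit adds at most one element to an orthogonal family.
-/

open Topology

/-- The Suslin condition (countable chain condition) on a topological space: every family of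
nonempty, pairwise disjoint open sets is countable. -/
def SuslinCondition (X : Type*) [TopologicalSpace X] : Prop :=
  ∀ T : Set (Set X), (∀ U ∈ T, IsOpen U ∧ U.Nonempty) → T.PairwiseDisjoint id → T.Countable

theorem SuslinCondition.of_isOpenMap_of_injective {X Y : Type*} [TopologicalSpace X]
    [TopologicalSpace Y] {f : X → Y} (hopen : IsOpenMap f) (hinj : Function.Injective f)
    (hY : SuslinCondition Y) : SuslinCondition X := by
  intro T hT hdisj
  have himage : (Set.image f '' T).Countable := by
    refine hY _ ?_ ?_
    · rintro _ ⟨U, hU, rfl⟩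
      exact ⟨hopen U (hT U hU).1, (hT U hU).2.image f⟩
    · rintro _ ⟨U, hU, rfl⟩ _ ⟨V, hV, rfl⟩ hne
      exact Set.disjoint_image_of_injective hinj (hdisj hU hV (ne_of_apply_ne _ hne))
  exact Set.countable_of_injective_of_countable_image hinj.image_injective.injOn himage

/-- A variant of countable decomposability (σ-finiteness) of a star algebra: every set of nonzero
elements that are mutually orthogonal, in the sense that `star a * b = 0`, is countable. Elements
take the place of the usual projections because a C⋆-algebra may have no nontrivial projections.
For operators on a Hilbert space, `star a * b = 0` says that `a` and `b` have orthogonal ranges. -/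
def IsCountablyDecomposable (A : Type*) [Mul A] [Zero A] [Star A] : Prop :=
  ∀ s : Set A, 0 ∉ s → s.Pairwise (fun a b => star a * b = 0) → s.Countable

section HilbertSpace

variable {𝕜 H : Type*} [RCLike 𝕜] [NormedAddCommGroup H] [InnerProductSpace 𝕜 H]

theorem half_norm_add_half_norm_le_dist_of_inner_eq_zero {x y : H} (h : inner 𝕜 x y = 0) :
    ‖x‖ / 2 + ‖y‖ / 2 ≤ dist x y := by
  have pythagoras : ‖x - y‖ * ‖x - y‖ = ‖x‖ * ‖x‖ + ‖y‖ * ‖y‖ := by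
    rw [norm_sub_mul_self (𝕜 := 𝕜), h, map_zero, mul_zero, sub_zero]
  rw [dist_eq_norm]
  nlinarith [norm_nonneg (x - y), sq_nonneg (‖x‖ - ‖y‖)]

variable (𝕜) in
theorem countable_of_pairwise_inner_eq_zero [TopologicalSpace.SeparableSpace H] {ι : Type*}
    {v : ι → H} (hv : ∀ i, v i ≠ 0) (horth : Pairwise fun i j => inner 𝕜 (v i) (v j) = 0) :
    Countable ι :=
  Pairwise.countable_of_isOpen_disjoint (s := fun i => Metric.ball (v i) (‖v i‖ / 2))
    (fun _ _ hij =>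
      Metric.ball_disjoint_ball (half_norm_add_half_norm_le_dist_of_inner_eq_zero (horth hij)))
    (fun _ => Metric.isOpen_ball)
    (fun i => Metric.nonempty_ball.2 (half_pos (norm_pos_iff.2 (hv i))))

theorem inner_apply_apply_eq_zero_of_star_mul_eq_zero [CompleteSpace H] {a b : H →L[𝕜] H}
    (h : star a * b = 0) (x y : H) : inner 𝕜 (a x) (b y) = 0 := by
  calc inner 𝕜 (a x) (b y) = inner 𝕜 x ((star a * b) y) :=
        (ContinuousLinearMap.adjoint_inner_right a x (b y)).symm
    _ = 0 := by rw [h, zero_apply, inner_zero_right]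

theorem isCountablyDecomposable_continuousLinearMap [CompleteSpace H]
    [TopologicalSpace.SeparableSpace H] : IsCountablyDecomposable (H →L[𝕜] H) := by
  intro s hs horth
  have hex : ∀ a : s, ∃ x, (a : H →L[𝕜] H) x ≠ 0 := fun a =>
    ContinuousLinearMap.exists_ne_zero (ne_of_mem_of_not_mem a.2 hs)
  choose x hx using hex
  exact countable_of_pairwise_inner_eq_zero 𝕜 hx fun a b hab =>
    inner_apply_apply_eq_zero_of_star_mul_eq_zero
      (horth a.2 b.2 (Subtype.coe_ne_coe.2 hab)) (x a) (x b)

end HilbertSpace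

namespace IsCountablyDecomposable

theorem of_injective {F A B : Type*} [Mul A] [Zero A] [Star A] [Mul B] [Zero B] [Star B]
    [FunLike F A B] [MulHomClass F A B] [ZeroHomClass F A B] [StarHomClass F A B]
    (hB : IsCountablyDecomposable B) (f : F) (hf : Function.Injective f) :
    IsCountablyDecomposable A := by
  intro s hs horth
  refine Set.countable_of_injective_of_countable_image hf.injOn (hB (f '' s) ?_ ?_)
  · rintro ⟨a, ha, hfa⟩
    exact hs ((map_eq_zero_iff f hf).1 hfa ▸ ha)
  · rintro _ ⟨a, ha, rfl⟩ _ ⟨b, hb, rfl⟩ hab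
    rw [← map_star, ← map_mul, horth ha hb (ne_of_apply_ne f hab), map_zero]

theorem unitization {R A : Type*} [Semiring R] [NoZeroDivisors R] [StarRing R]
    [NonUnitalNonAssocSemiring A] [Star A] [Module R A]
    (hA : IsCountablyDecomposable A) : IsCountablyDecomposable (Unitization R A) := by
  intro s hs horth
  let inr : A → Unitization R A := Unitization.inr
  have hinr : Function.Injective inr := Unitization.inr_injective
  have hideal : (inr ⁻¹' s).Countable := by
    refine hA _ hs fun a ha b hb hab => hinr ?_
    simpa only [inr, Unitization.inr_mul, Unitization.inr_star, Unitization.inr_zero] using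
      horth ha hb (hinr.ne hab)
  have hscalar : {b ∈ s | b.fst ≠ 0}.Subsingleton := by
    rintro a ⟨ha, ha₀⟩ b ⟨hb, hb₀⟩
    by_contra hab
    have hfst : star a.fst * b.fst = 0 := congrArg (·.fst) (horth ha hb hab)
    exact mul_ne_zero (star_ne_zero.2 ha₀) hb₀ hfst
  refine ((hideal.image inr).union hscalar.countable).mono fun b hb => ?_
  by_cases hb₀ : b.fst = 0
  · have hb_inr : inr b.snd = b := Unitization.ext hb₀.symm rfl
    exact Or.inl ⟨b.snd, by rwa [Set.mem_preimage, hb_inr], hb_inr⟩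
  · exact Or.inr ⟨hb, hb₀⟩

end IsCountablyDecomposable

section ContinuousMap

variable {𝕜 X : Type*} [RCLike 𝕜] [TopologicalSpace X] [CompletelyRegularSpace X]

variable (𝕜) in
theorem exists_continuousMap_ne_zero_support_subset {U : Set X} (hU : IsOpen U)
    (hne : U.Nonempty) : ∃ f : C(X, 𝕜), f ≠ 0 ∧ Function.support f ⊆ U := by
  obtain ⟨x, hx⟩ := hne
  obtain ⟨g, hg, hgx, hgU⟩ := CompletelyRegularSpace.completely_regular x Uᶜ hU.isClosed_compl
    (Set.notMem_compl_iff.2 hx)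
  refine ⟨⟨fun y => ((1 - g y : ℝ) : 𝕜), by fun_prop⟩, fun h => ?_, fun y hy => ?_⟩
  · simpa [hgx] using DFunLike.congr_fun h x
  · by_contra hyU
    exact hy (by simp [hgU hyU])

theorem IsCountablyDecomposable.suslinCondition (h : IsCountablyDecomposable C(X, 𝕜)) :
    SuslinCondition X := by
  intro T hT hdisj
  choose! f hf₀ hfU using fun U hU =>
    exists_continuousMap_ne_zero_support_subset 𝕜 (hT U hU).1 (hT U hU).2
  have hsupp : ∀ U ∈ T, ∀ V ∈ T, U ≠ V →
      Disjoint (Function.support (f U)) (Function.support (f V)) :=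
    fun U hU V hV hUV => (hdisj hU hV hUV).mono (hfU U hU) (hfU V hV)
  have hinj : T.InjOn f := by
    intro U hU V hV hfUV
    by_contra hUV
    have hempty : Function.support (f U) = ∅ :=
      disjoint_self.1 (by simpa only [← hfUV] using hsupp U hU V hV hUV)
    exact hf₀ U hU (DFunLike.coe_injective (Function.support_eq_empty_iff.1 hempty))
  refine Set.countable_of_injective_of_countable_image hinj (h (f '' T) ?_ ?_)
  · rintro ⟨U, hU, hfU₀⟩
    exact hf₀ U hU hfU₀
  · rintro _ ⟨U, hU, rfl⟩ _ ⟨V, hV, rfl⟩ hUV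
    ext x
    have hx : f U x = 0 ∨ f V x = 0 := by
      by_contra! hx
      exact Set.disjoint_left.1 (hsupp U hU V hV (ne_of_apply_ne f hUV)) hx.1 hx.2
    simpa using hx

end ContinuousMap

section CharacterSpace

open WeakDual

theorem continuous_characterSpace_eval {𝕜 A : Type*} [CommSemiring 𝕜] [TopologicalSpace 𝕜]
    [ContinuousAdd 𝕜] [ContinuousConstSMul 𝕜 𝕜] [NonUnitalNonAssocSemiring A]
    [TopologicalSpace A] [Module 𝕜 A] (a : A) : Continuous fun φ : characterSpace 𝕜 A => φ a :=
  (WeakDual.eval_continuous a).comp continuous_subtype_val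

section Unitization

variable {𝕜 A : Type*} [NontriviallyNormedField 𝕜] [NonUnitalNormedRing A]
  [NormedSpace 𝕜 A] [IsScalarTower 𝕜 A A] [SMulCommClass 𝕜 A A] [RegularNormedAlgebra 𝕜 A]

/-- The restriction to `A` of a character of the unitization of `A`. It takes values in the weak
dual because the restriction may vanish. -/
noncomputable def restrictUnitizationCharacter (ψ : characterSpace 𝕜 (Unitization 𝕜 A)) :
    WeakDual 𝕜 A :=
  StrongDual.toWeakDual <|
    (CharacterSpace.toCLM ψ).comp ⟨Unitization.inrHom 𝕜 𝕜 A, Unitization.continuous_inr⟩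

theorem restrictUnitizationCharacter_apply (ψ : characterSpace 𝕜 (Unitization 𝕜 A)) (a : A) :
    restrictUnitizationCharacter ψ a = ψ (Unitization.inr a) :=
  rfl

theorem continuous_restrictUnitizationCharacter :
    Continuous (restrictUnitizationCharacter (𝕜 := 𝕜) (A := A)) :=
  WeakDual.continuous_of_continuous_eval fun _ => continuous_characterSpace_eval _

variable [CompleteSpace 𝕜] [CompleteSpace A]

/-- The extension of a character of `A` to a character of the unitization of `A`, used to realize
the spectrum of `A` inside that of its unitization. -/
noncomputable def unitizationCharacter (φ : characterSpace 𝕜 A) :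
    characterSpace 𝕜 (Unitization 𝕜 A) :=
  CharacterSpace.equivAlgHom.symm (Unitization.lift (CharacterSpace.toNonUnitalAlgHom φ))

theorem unitizationCharacter_apply (φ : characterSpace 𝕜 A) (b : Unitization 𝕜 A) :
    unitizationCharacter φ b = b.fst + φ b.snd := by
  simp [unitizationCharacter, Unitization.lift_apply]

theorem unitizationCharacter_inr (φ : characterSpace 𝕜 A) (a : A) :
    unitizationCharacter φ (Unitization.inr a) = φ a := by
  simp only [unitizationCharacter_apply, Unitization.fst_inr, Unitization.snd_inr, zero_add]

theorem restrictUnitizationCharacter_unitizationCharacter (φ : characterSpace 𝕜 A) :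
    restrictUnitizationCharacter (unitizationCharacter φ) = φ :=
  DFunLike.ext _ _ (unitizationCharacter_inr φ)

theorem continuous_unitizationCharacter :
    Continuous (unitizationCharacter (𝕜 := 𝕜) (A := A)) := by
  refine Continuous.subtype_mk (WeakDual.continuous_of_continuous_eval fun b => ?_) _
  exact (continuous_const.add (continuous_characterSpace_eval b.snd)).congr fun φ =>
    (unitizationCharacter_apply φ b).symm

theorem range_unitizationCharacter :
    Set.range (unitizationCharacter (𝕜 := 𝕜) (A := A)) =
      {ψ | restrictUnitizationCharacter ψ ≠ 0} := by
  ext ψ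
  constructor
  · rintro ⟨φ, rfl⟩
    rw [Set.mem_ofPred_eq, restrictUnitizationCharacter_unitizationCharacter]
    exact φ.2.1
  · intro hψ
    have hmul : ∀ a b : A, restrictUnitizationCharacter ψ (a * b) =
        restrictUnitizationCharacter ψ a * restrictUnitizationCharacter ψ b := fun a b => by
      simp only [restrictUnitizationCharacter_apply, Unitization.inr_mul, map_mul]
    refine ⟨⟨restrictUnitizationCharacter ψ, hψ, hmul⟩, CharacterSpace.ext fun b => ?_⟩
    rw [unitizationCharacter_apply]
    calc b.fst + ψ (Unitization.inr b.snd)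
      _ = ψ (Unitization.inl b.fst) + ψ (Unitization.inr b.snd) := by
          rw [← Unitization.algebraMap_eq_inl, AlgHomClass.commutes, Algebra.algebraMap_self_apply]
      _ = ψ b := by rw [← map_add, Unitization.inl_fst_add_inr_snd_eq]

theorem isOpenEmbedding_unitizationCharacter :
    IsOpenEmbedding (unitizationCharacter (𝕜 := 𝕜) (A := A)) where
  toIsEmbedding := by
    refine .of_comp continuous_unitizationCharacter continuous_restrictUnitizationCharacter ?_
    rw [show restrictUnitizationCharacter ∘ unitizationCharacter = Subtype.val from
      funext (restrictUnitizationCharacter_unitizationCharacter (𝕜 := 𝕜) (A := A))]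
    exact .subtypeVal
  isOpen_range := by
    rw [range_unitizationCharacter]
    exact isOpen_ne_fun continuous_restrictUnitizationCharacter continuous_const

end Unitization

theorem suslinCondition_characterSpace_of_unital {A : Type*} [CommCStarAlgebra A]
    (hA : IsCountablyDecomposable A) : SuslinCondition (characterSpace ℂ A) :=
  (hA.of_injective (gelfandStarTransform A).symm
    (gelfandStarTransform A).symm.injective).suslinCondition

theorem suslinCondition_characterSpace {A : Type*} [NonUnitalCommCStarAlgebra A]
    (hA : IsCountablyDecomposable A) : SuslinCondition (characterSpace ℂ A) :=
  .of_isOpenMap_of_injective isOpenEmbedding_unitizationCharacter.isOpenMap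
    isOpenEmbedding_unitizationCharacter.injective
    (suslinCondition_characterSpace_of_unital hA.unitization)

end CharacterSpace

/-- The spectrum (character space) of a commutative C*-subalgebra of the bounded operators
on a separable Hilbert space satisfies the Suslin condition: every pairwise disjoint family
of nonempty open subsets is countable. -/
theorem stmt3 {H : Type*} [NormedAddCommGroup H] [InnerProductSpace ℂ H] [CompleteSpace H]
    [TopologicalSpace.SeparableSpace H]
    (S : NonUnitalStarSubalgebra ℂ (H →L[ℂ] H))
    (hclosed : IsClosed (S : Set (H →L[ℂ] H)))
    (hcomm : ∀ a b : S, a * b = b * a)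
    (T : Set (Set (WeakDual.characterSpace ℂ S)))
    (hT : ∀ U ∈ T, IsOpen U ∧ U.Nonempty) (hdisj : T.PairwiseDisjoint id) :
    T.Countable := by
  have : IsClosed (S : Set (H →L[ℂ] H)) := hclosed
  let _ : NonUnitalCommCStarAlgebra S :=
    { NonUnitalStarSubalgebra.nonUnitalCStarAlgebra S with mul_comm := hcomm }
  have hS : IsCountablyDecomposable S :=
    isCountablyDecomposable_continuousLinearMap.of_injective
      (NonUnitalStarSubalgebraClass.subtype S) Subtype.val_injective
  exact suslinCondition_characterSpace hS T hT hdisj
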